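/- Let (M, g, ψ) be a seven-dimensional Riemannian manifold with G₂-structure ψ (a 3-form pointwise linearly equivalent to the standard G₂ 3-form on ℝ⁷). A four-dimensional submanifold X of M is a generalized co-associative calibration, i.e. calibrated with respect to *ψ (so *ψ restricts to the volume form of X), if and only if ψ|_X = 0 (for a suitable orientation of X). -/

import Mathlib

/-!
# Statement 12: characterization of generalized co-associative calibrations

Let (M, g, ψ) be a seven-dimensional Riemannian manifold with G₂-structure ψ (a 3-form
pointwise linearly equivalent to the standard G₂ 3-form on ℝ⁷).  A four-dimensional
submanifold X of M is a generalized co-associative calibration, i.e. calibrated with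
respect to the Hodge dual *ψ (so *ψ restricts to the volume form of X, for a suitable
orientation of X), if and only if ψ|_X = 0.

Fiberwise formulation: as in the other G₂ statements, tangent spaces are 7-dimensional
inner product spaces and the G₂-structure provides pointwise orthonormal coframes carrying
ψ and *ψ to the standard associative and co-associative forms on ℝ⁷.  A 4-dimensional
submanifold is recorded by its point set S and tangent distribution τ; it is calibrated by
*ψ (for a suitable orientation) when at each of its points some orthonormal frame of the
tangent 4-plane evaluates to 1 under *ψ, and ψ|_X = 0 means that ψ vanishes on all triples
of tangent vectors.
-/

noncomputable section

/-- The elementary coordinate k-form `e^{e 0} ∧ ⋯ ∧ e^{e (k-1)}` on `EuclideanSpace ℝ I`. -/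
def elemForm {I : Type*} [Fintype I] [DecidableEq I] {k : ℕ} (e : Fin k → I) :
    (EuclideanSpace ℝ I) [⋀^Fin k]→ₗ[ℝ] ℝ :=
  ((Pi.basisFun ℝ (Fin k)).det).compLinearMap
    (LinearMap.pi fun a => EuclideanSpace.projₗ (e a))

/-- The standard G₂-invariant 3-form on ℝ⁷ (indices 0,…,6). -/
def assocForm : (EuclideanSpace ℝ (Fin 7)) [⋀^Fin 3]→ₗ[ℝ] ℝ :=
  elemForm ![0, 1, 2] + elemForm ![0, 3, 4] - elemForm ![0, 5, 6] +
    elemForm ![1, 3, 5] + elemForm ![1, 4, 6] + elemForm ![2, 3, 6] - elemForm ![2, 4, 5]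

/-- The Hodge dual *ψ₀ of the standard G₂ 3-form: the standard co-associative 4-form. -/
def coassocForm : (EuclideanSpace ℝ (Fin 7)) [⋀^Fin 4]→ₗ[ℝ] ℝ :=
  elemForm ![3, 4, 5, 6] + elemForm ![1, 2, 5, 6] - elemForm ![1, 2, 3, 4] +
    elemForm ![0, 2, 4, 6] + elemForm ![0, 2, 3, 5] + elemForm ![0, 1, 4, 5] -
    elemForm ![0, 1, 3, 6]

/-- A seven-dimensional Riemannian manifold with G₂-structure, presented fiberwise. -/
structure G2StructureManifold where
  M : Type
  T : M → Type
  instN : ∀ p, NormedAddCommGroup (T p)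
  instI : ∀ p, InnerProductSpace ℝ (T p)
  dim : ∀ p, Module.finrank ℝ (T p) = 7
  /-- the G₂ 3-form ψ -/
  ψ : ∀ p, (T p) [⋀^Fin 3]→ₗ[ℝ] ℝ
  /-- the Hodge dual 4-form *ψ -/
  ψdual : ∀ p, (T p) [⋀^Fin 4]→ₗ[ℝ] ℝ
  /-- G₂-structure: around every point there is an orthonormal coframe in which ψ and *ψ
  take their standard forms -/
  adapted : ∀ p, ∃ ι : T p ≃ₗᵢ[ℝ] EuclideanSpace ℝ (Fin 7),
    ψ p = assocForm.compLinearMap ι.toLinearEquiv.toLinearMap ∧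
    ψdual p = coassocForm.compLinearMap ι.toLinearEquiv.toLinearMap

attribute [instance] G2StructureManifold.instN G2StructureManifold.instI

/-!
Let `x × y` be the cross product with `⟪x × y, z⟫ = ψ₀(x, y, z)`. For an orthonormal frame
`x, y, z, w` the iterated product `x × (y × (z × w))` is a combination of `y, z, w` whose
coefficients are, up to sign, the values of `ψ₀` on the three faces containing `x`. Repeated use of
Lagrange's identity also gives its squared length as `1 - ψ₀(y, z, w) ^ 2 - *ψ₀(x, y, z, w) ^ 2`.
Comparing the two, `*ψ₀ ^ 2` plus the squares of `ψ₀` on the four faces of the frame is `1`. So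
`*ψ₀ = ±1` exactly when `ψ₀` vanishes on the faces, hence on the 4-plane they span, and the sign
is a choice of orientation.
-/

open scoped RealInnerProductSpace

/-- Laplace expansion along the first two rows. -/
theorem det_fin_four {R : Type*} [CommRing R] (A : Matrix (Fin 4) (Fin 4) R) :
    A.det =
      (A 0 0 * A 1 1 - A 0 1 * A 1 0) * (A 2 2 * A 3 3 - A 2 3 * A 3 2)
        - (A 0 0 * A 1 2 - A 0 2 * A 1 0) * (A 2 1 * A 3 3 - A 2 3 * A 3 1)
        + (A 0 0 * A 1 3 - A 0 3 * A 1 0) * (A 2 1 * A 3 2 - A 2 2 * A 3 1)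
        + (A 0 1 * A 1 2 - A 0 2 * A 1 1) * (A 2 0 * A 3 3 - A 2 3 * A 3 0)
        - (A 0 1 * A 1 3 - A 0 3 * A 1 1) * (A 2 0 * A 3 2 - A 2 2 * A 3 0)
        + (A 0 2 * A 1 3 - A 0 3 * A 1 2) * (A 2 0 * A 3 1 - A 2 1 * A 3 0) := by
  simp only [Matrix.det_succ_row_zero A, Fin.sum_univ_four, Matrix.det_fin_three,
    Matrix.submatrix_apply, Fin.succAbove, Fin.reduceSucc, Fin.reduceCastSucc, Fin.castSucc_zero,
    Fin.castSucc_one, Fin.succ_zero_eq_one, Fin.succ_one_eq_two, Fin.reduceLT, Fin.coe_ofNat_eq_mod,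
    ↓reduceIte]
  ring

theorem elemForm_apply {I : Type*} [Fintype I] [DecidableEq I] {k : ℕ} (e : Fin k → I)
    (v : Fin k → EuclideanSpace ℝ I) :
    elemForm e v = (Matrix.of fun i j => v i (e j)).det := by
  rw [elemForm, AlternatingMap.compLinearMap_apply, Pi.basisFun_det_apply]
  rfl

/-- The seven-dimensional cross product, determined by `⟪x ⨯₇ y, z⟫ = ψ₀(x, y, z)`
(see `assocForm_apply`); it is given in coordinates so that identities between iterated products
become polynomial identities. -/
def g2Cross (x y : EuclideanSpace ℝ (Fin 7)) : EuclideanSpace ℝ (Fin 7) :=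
  !₂[x 1 * y 2 - x 2 * y 1 + (x 3 * y 4 - x 4 * y 3) - (x 5 * y 6 - x 6 * y 5),
    x 2 * y 0 - x 0 * y 2 + (x 3 * y 5 - x 5 * y 3) + (x 4 * y 6 - x 6 * y 4),
    x 0 * y 1 - x 1 * y 0 + (x 3 * y 6 - x 6 * y 3) - (x 4 * y 5 - x 5 * y 4),
    x 4 * y 0 - x 0 * y 4 + (x 5 * y 1 - x 1 * y 5) + (x 6 * y 2 - x 2 * y 6),
    x 0 * y 3 - x 3 * y 0 + (x 6 * y 1 - x 1 * y 6) - (x 5 * y 2 - x 2 * y 5),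
    x 0 * y 6 - x 6 * y 0 + (x 1 * y 3 - x 3 * y 1) - (x 2 * y 4 - x 4 * y 2),
    x 5 * y 0 - x 0 * y 5 + (x 1 * y 4 - x 4 * y 1) + (x 2 * y 3 - x 3 * y 2)]

local infix:74 " ⨯₇ " => g2Cross

section CrossProduct

variable (x y z w : EuclideanSpace ℝ (Fin 7))

theorem real_inner_fin_seven :
    ⟪x, y⟫ = x 0 * y 0 + x 1 * y 1 + x 2 * y 2 + x 3 * y 3 + x 4 * y 4 + x 5 * y 5 + x 6 * y 6 := by
  simp [PiLp.inner_apply, Fin.sum_univ_seven, mul_comm]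

theorem assocForm_apply (v : Fin 3 → EuclideanSpace ℝ (Fin 7)) :
    assocForm v = ⟪v 0 ⨯₇ v 1, v 2⟫ := by
  simp only [assocForm, AlternatingMap.add_apply, AlternatingMap.sub_apply, elemForm_apply,
    Matrix.det_fin_three, real_inner_fin_seven, g2Cross, Matrix.of_apply, Matrix.cons_val]
  ring

theorem coassocForm_apply (v : Fin 4 → EuclideanSpace ℝ (Fin 7)) :
    coassocForm v =
      ⟪v 0, v 2⟫ * ⟪v 1, v 3⟫ - ⟪v 0, v 3⟫ * ⟪v 1, v 2⟫ - ⟪v 0 ⨯₇ v 1, v 2 ⨯₇ v 3⟫ := by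
  simp only [coassocForm, AlternatingMap.add_apply, AlternatingMap.sub_apply, elemForm_apply,
    det_fin_four, real_inner_fin_seven, g2Cross, Matrix.of_apply, Matrix.cons_val]
  ring

theorem inner_g2Cross_cyclic : ⟪x ⨯₇ y, z⟫ = ⟪y ⨯₇ z, x⟫ := by
  simp only [real_inner_fin_seven, g2Cross, Matrix.cons_val]
  ring

theorem norm_g2Cross_sq : ‖x ⨯₇ y‖ ^ 2 = ‖x‖ ^ 2 * ‖y‖ ^ 2 - ⟪x, y⟫ ^ 2 := by
  simp only [← real_inner_self_eq_norm_sq, real_inner_fin_seven, g2Cross, Matrix.cons_val]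
  ring

theorem g2Cross_g2Cross_g2Cross :
    x ⨯₇ (y ⨯₇ (z ⨯₇ w)) =
      ⟪x ⨯₇ z, w⟫ • y - ⟪x ⨯₇ y, w⟫ • z + ⟪x ⨯₇ y, z⟫ • w
        - ⟪x, y⟫ • (z ⨯₇ w) + ⟪x, z⟫ • (y ⨯₇ w) - ⟪x, w⟫ • (y ⨯₇ z)
        - ⟪y, z⟫ • (x ⨯₇ w) + ⟪y, w⟫ • (x ⨯₇ z) := by
  ext i
  fin_cases i <;>
    simp only [real_inner_fin_seven, g2Cross, PiLp.add_apply, PiLp.sub_apply, PiLp.smul_apply,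
      smul_eq_mul, Fin.zero_eta, Fin.mk_one, Fin.reduceFinMk, Matrix.cons_val] <;>
    ring

end CrossProduct

section OrthonormalFrame

variable {v : Fin 4 → EuclideanSpace ℝ (Fin 7)}

theorem norm_g2Cross_g2Cross_g2Cross_sq (hv : Orthonormal ℝ v) :
    ‖v 0 ⨯₇ (v 1 ⨯₇ (v 2 ⨯₇ v 3))‖ ^ 2 =
      ⟪v 0 ⨯₇ v 2, v 3⟫ ^ 2 + ⟪v 0 ⨯₇ v 1, v 3⟫ ^ 2 + ⟪v 0 ⨯₇ v 1, v 2⟫ ^ 2 := by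
  have h_inner := orthonormal_iff_ite.mp hv
  have h_expand : v 0 ⨯₇ (v 1 ⨯₇ (v 2 ⨯₇ v 3)) =
      ⟪v 0 ⨯₇ v 2, v 3⟫ • v 1 - ⟪v 0 ⨯₇ v 1, v 3⟫ • v 2 + ⟪v 0 ⨯₇ v 1, v 2⟫ • v 3 := by
    simp [g2Cross_g2Cross_g2Cross, h_inner]
  rw [h_expand, ← real_inner_self_eq_norm_sq]
  simp only [inner_add_left, inner_add_right, inner_sub_left, inner_sub_right,
    real_inner_smul_left, real_inner_smul_right, h_inner, Fin.reduceEq, ↓reduceIte]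
  ring

theorem norm_g2Cross_g2Cross_g2Cross_sq_eq_one_sub (hv : Orthonormal ℝ v) :
    ‖v 0 ⨯₇ (v 1 ⨯₇ (v 2 ⨯₇ v 3))‖ ^ 2 = 1 - ⟪v 1 ⨯₇ v 2, v 3⟫ ^ 2 - coassocForm v ^ 2 := by
  have h_inner := orthonormal_iff_ite.mp hv
  have h_coassoc : ⟪v 0, v 1 ⨯₇ (v 2 ⨯₇ v 3)⟫ = -coassocForm v := by
    rw [real_inner_comm, ← inner_g2Cross_cyclic]
    simp [coassocForm_apply, h_inner]
  have h_assoc : ⟪v 1, v 2 ⨯₇ v 3⟫ = ⟪v 1 ⨯₇ v 2, v 3⟫ := by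
    rw [real_inner_comm, ← inner_g2Cross_cyclic]
  simp only [norm_g2Cross_sq, hv.norm_eq_one, h_coassoc, h_assoc]
  simp [h_inner]

/-- The coassociative equality of Harvey and Lawson. -/
theorem coassocForm_sq_add_sum_assocForm_sq (hv : Orthonormal ℝ v) :
    coassocForm v ^ 2 + ∑ i : Fin 4, assocForm (i.removeNth v) ^ 2 = 1 := by
  have h_faces : ∑ i : Fin 4, assocForm (i.removeNth v) ^ 2 =
      ⟪v 1 ⨯₇ v 2, v 3⟫ ^ 2 + ⟪v 0 ⨯₇ v 2, v 3⟫ ^ 2 + ⟪v 0 ⨯₇ v 1, v 3⟫ ^ 2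
        + ⟪v 0 ⨯₇ v 1, v 2⟫ ^ 2 := by
    simp [Fin.sum_univ_four, assocForm_apply, Fin.removeNth, Fin.succAbove]
  linarith [norm_g2Cross_g2Cross_g2Cross_sq hv, norm_g2Cross_g2Cross_g2Cross_sq_eq_one_sub hv]

theorem coassocForm_sq_eq_one_iff (hv : Orthonormal ℝ v) :
    coassocForm v ^ 2 = 1 ↔ ∀ i : Fin 4, assocForm (i.removeNth v) = 0 := by
  simp [← coassocForm_sq_add_sum_assocForm_sq hv,
    Finset.sum_eq_zero_iff_of_nonneg fun _ _ => sq_nonneg _]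

end OrthonormalFrame

theorem exists_eq_succAbove_comp_perm {n : ℕ} {e : Fin n → Fin (n + 1)}
    (he : Function.Injective e) :
    ∃ (i : Fin (n + 1)) (σ : Equiv.Perm (Fin n)), e = i.succAbove ∘ σ := by
  obtain ⟨i, hi⟩ : ∃ i, ∀ j, e j ≠ i := by
    by_contra! h_surj
    simpa using Fintype.card_le_of_surjective e h_surj
  choose σ hσ using fun j => Fin.exists_succAbove_eq (hi j)
  have h_comp : e = i.succAbove ∘ σ := funext fun j => (hσ j).symm
  have hσ_inj : Function.Injective σ := .of_comp (h_comp ▸ he)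
  exact ⟨i, .ofBijective σ hσ_inj.bijective_of_finite, h_comp⟩

theorem alternatingMap_eq_zero_of_removeNth_basis {R M N : Type*} [CommSemiring R] [AddCommMonoid M]
    [AddCommGroup N] [Module R M] [Module R N] {n : ℕ} (b : Module.Basis (Fin (n + 1)) R M)
    {f : M [⋀^Fin n]→ₗ[R] N} (hf : ∀ i : Fin (n + 1), f (i.removeNth b) = 0) : f = 0 := by
  refine b.ext_alternating fun e he => ?_
  obtain ⟨i, σ, rfl⟩ := exists_eq_succAbove_comp_perm he
  calc f ((i.removeNth b) ∘ σ) = Equiv.Perm.sign σ • f (i.removeNth b) := f.map_perm _ _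
    _ = 0 := by rw [hf, smul_zero]

section FourPlane

variable {E : Type*} [NormedAddCommGroup E] [InnerProductSpace ℝ E]

theorem exists_orthonormal_coassocForm_eq_one_iff (h_dim : Module.finrank ℝ E = 4)
    (f : E →ₗᵢ[ℝ] EuclideanSpace ℝ (Fin 7)) :
    (∃ v : Fin 4 → E, Orthonormal ℝ v ∧ coassocForm (f ∘ v) = 1) ↔
      assocForm.compLinearMap f.toLinearMap = 0 := by
  constructor
  · rintro ⟨v, hv, h_cal⟩
    let b := basisOfLinearIndependentOfCardEqFinrank hv.linearIndependent (by simp [h_dim])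
    have h_faces := (coassocForm_sq_eq_one_iff (hv.comp_linearIsometry f)).mp (by simp [h_cal])
    refine alternatingMap_eq_zero_of_removeNth_basis b fun i => ?_
    rw [coe_basisOfLinearIndependentOfCardEqFinrank]
    exact h_faces i
  · intro h_assoc
    have : FiniteDimensional ℝ E := Module.finite_of_finrank_pos (by simp [h_dim])
    let v := (stdOrthonormalBasis ℝ E).reindex (finCongr h_dim)
    have h_sq : coassocForm (f ∘ v) ^ 2 = 1 :=
      (coassocForm_sq_eq_one_iff (v.orthonormal.comp_linearIsometry f)).mpr fun i =>
        DFunLike.congr_fun h_assoc (i.removeNth v)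
    obtain h_pos | h_neg := sq_eq_one_iff.mp h_sq
    · exact ⟨v, v.orthonormal, h_pos⟩
    · refine ⟨v ∘ Equiv.swap 0 1, v.orthonormal.comp _ (Equiv.injective _), ?_⟩
      rw [← Function.comp_assoc, coassocForm.map_swap _ (by decide), h_neg, neg_neg]

end FourPlane

/-- Let (M, g, ψ) be a seven-dimensional Riemannian manifold with
G₂-structure and let X be a four-dimensional submanifold of M, given by its point set S
and its tangent distribution τ.  Then X is a generalized co-associative calibration —
calibrated with respect to *ψ for a suitable orientation of X, i.e. at every point of X
some orthonormal frame of the tangent 4-plane evaluates to 1 under *ψ, so that *ψ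
restricts to the volume form of X — if and only if ψ|_X = 0, i.e. ψ vanishes on all
triples of vectors tangent to X. -/
theorem coassociative_iff_psi_vanishes (X : G2StructureManifold)
    (S : Set X.M) (τ : ∀ p, Submodule ℝ (X.T p))
    (hτ : ∀ p ∈ S, Module.finrank ℝ (τ p) = 4) :
    ((∀ p ∈ S, ∃ v : Fin 4 → X.T p,
        Orthonormal ℝ v ∧ (∀ i, v i ∈ τ p) ∧ X.ψdual p v = 1) ↔
      (∀ p ∈ S, ∀ w : Fin 3 → X.T p, (∀ i, w i ∈ τ p) → X.ψ p w = 0)) := by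
  refine forall₂_congr fun p hp => ?_
  obtain ⟨ι, hψ, hψdual⟩ := X.adapted p
  let f := ι.toLinearIsometry.comp (τ p).subtypeₗᵢ
  calc
    _ ↔ ∃ v : Fin 4 → τ p, Orthonormal ℝ v ∧ coassocForm (f ∘ v) = 1 := by
      rw [hψdual]
      constructor
      · rintro ⟨v, hv, hvτ, h_cal⟩
        exact ⟨fun i => ⟨v i, hvτ i⟩, ((τ p).subtypeₗᵢ.orthonormal_comp_iff).mp hv, h_cal⟩
      · rintro ⟨v, hv, h_cal⟩
        exact ⟨fun i => v i, hv.comp_linearIsometry (τ p).subtypeₗᵢ, fun i => (v i).2, h_cal⟩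
    _ ↔ assocForm.compLinearMap f.toLinearMap = 0 :=
      exists_orthonormal_coassocForm_eq_one_iff (hτ p hp) f
    _ ↔ _ := by
      rw [hψ]
      exact ⟨fun h w hw => DFunLike.congr_fun h fun i => (⟨w i, hw i⟩ : τ p),
        fun h => AlternatingMap.ext fun w => h _ fun i => (w i).2⟩
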